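/- The family {P_J} indexed by pairs of twin binary trees, where P_J is the sum of the fundamental basis elements F_σ of FQSym over permutations σ with P-symbol of shape J, spans a Hopf subalgebra of FQSym (i.e., is closed under the product and coproduct of FQSym). -/

import Mathlib

open scoped Classical

/-- Baxter adjacency relations on words over the alphabet of natural numbers. -/
def BaxterAdj (w w' : List ℕ) : Prop :=
  (∃ (a b c d : ℕ) (u v : List ℕ), a ≤ b ∧ b < c ∧ c ≤ d ∧
      w = c :: (u ++ a :: d :: (v ++ [b])) ∧ w' = c :: (u ++ d :: a :: (v ++ [b]))) ∨
  (∃ (a b c d : ℕ) (u v : List ℕ), a < b ∧ b ≤ c ∧ c < d ∧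
      w = b :: (u ++ d :: a :: (v ++ [c])) ∧ w' = b :: (u ++ a :: d :: (v ++ [c])))

/-- One rewriting step: an adjacency applied inside a word (congruence context). -/
def BaxterStep (w w' : List ℕ) : Prop :=
  ∃ (p s u v : List ℕ), BaxterAdj u v ∧ w = p ++ u ++ s ∧ w' = p ++ v ++ s

/-- The Baxter congruence: the equivalence generated by the Baxter steps. -/
def BaxterEquiv : List ℕ → List ℕ → Prop := Relation.EqvGen BaxterStep

/-- Sylvester adjacency: a c u b ≡ c a u b when a ≤ b < c. -/
def SylvAdj (w w' : List ℕ) : Prop :=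
  ∃ (a b c : ℕ) (u : List ℕ), a ≤ b ∧ b < c ∧
    w = a :: c :: (u ++ [b]) ∧ w' = c :: a :: (u ++ [b])

def SylvStep (w w' : List ℕ) : Prop :=
  ∃ (p s u v : List ℕ), SylvAdj u v ∧ w = p ++ u ++ s ∧ w' = p ++ v ++ s

def SylvEquiv : List ℕ → List ℕ → Prop := Relation.EqvGen SylvStep

/-- #-sylvester adjacency: b u a c ≡ b u c a when a < b ≤ c. -/
def SylvHAdj (w w' : List ℕ) : Prop :=
  ∃ (a b c : ℕ) (u : List ℕ), a < b ∧ b ≤ c ∧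
    w = b :: (u ++ [a, c]) ∧ w' = b :: (u ++ [c, a])

def SylvHStep (w w' : List ℕ) : Prop :=
  ∃ (p s u v : List ℕ), SylvHAdj u v ∧ w = p ++ u ++ s ∧ w' = p ++ v ++ s

def SylvHEquiv : List ℕ → List ℕ → Prop := Relation.EqvGen SylvHStep

/-- The standardized word of `u`: position `i` receives the rank of the letter `u i`
(ties broken from left to right), ranks starting at `1`. -/
def std (u : List ℕ) : List ℕ :=
  (List.range u.length).map fun i =>
    ((List.range u.length).filter fun j =>
      decide (u.getD j 0 < u.getD i 0 ∨ (u.getD j 0 = u.getD i 0 ∧ j < i))).length + 1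

/-- The maximal letter of a word. -/
def wordMax (u : List ℕ) : ℕ := u.foldr max 0

/-- The Schützenberger transformation: reverse and complement each letter w.r.t. max + 1. -/
def schutz (u : List ℕ) : List ℕ := u.reverse.map fun x => wordMax u + 1 - x

/-- Labeled binary trees. -/
inductive BT where
  | leaf : BT
  | node : BT → ℕ → BT → BT
deriving DecidableEq

/-- Leaf insertion into a left binary search tree. -/
def leafInsL : BT → ℕ → BT
  | .leaf, a => .node .leaf a .leaf
  | .node l b r, a => if a < b then .node (leafInsL l a) b r else .node l b (leafInsL r a)

/-- Leaf insertion into a right binary search tree. -/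
def leafInsR : BT → ℕ → BT
  | .leaf, a => .node .leaf a .leaf
  | .node l b r, a => if a ≤ b then .node (leafInsR l a) b r else .node l b (leafInsR r a)

/-- The lower restricted tree `T_{≤ a}` of a right binary search tree. -/
def splitLE : BT → ℕ → BT
  | .leaf, _ => .leaf
  | .node l b r, a => if b ≤ a then .node l b (splitLE r a) else splitLE l a

/-- The higher restricted tree `T_{> a}` of a right binary search tree. -/
def splitGT : BT → ℕ → BT
  | .leaf, _ => .leaf
  | .node l b r, a => if b ≤ a then splitGT r a else .node (splitGT l a) b r

/-- Root insertion into a right binary search tree. -/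
def rootIns (t : BT) (a : ℕ) : BT := .node (splitLE t a) a (splitGT t a)

/-- The left tree of the P-symbol: leaf insertions from left to right. -/
def insL (u : List ℕ) : BT := u.foldl leafInsL .leaf

/-- The right tree of the P-symbol: root insertions from left to right. -/
def insR (u : List ℕ) : BT := u.foldl rootIns .leaf

/-- The P-symbol of a word. -/
def Psymb (u : List ℕ) : BT × BT := (insL u, insR u)

/-- Unlabeled binary trees. -/
inductive UBT where
  | leaf : UBT
  | node : UBT → UBT → UBT
deriving DecidableEq

/-- The shape of a labeled binary tree. -/
def shape : BT → UBT
  | .leaf => .leaf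
  | .node l _ r => .node (shape l) (shape r)

/-- The shape of the P-symbol of a word. -/
def Pshape (u : List ℕ) : UBT × UBT := (shape (insL u), shape (insR u))

/-- Number of internal nodes. -/
def sizeU : UBT → ℕ
  | .leaf => 0
  | .node l r => sizeU l + sizeU r + 1

/-- Orientations of the leaves, from left to right: `true` means right-oriented
(the leaf is the right child of its parent); the parameter is the orientation
assigned if the tree is reduced to a leaf. -/
def loU : UBT → Bool → List Bool
  | .leaf, b => [b]
  | .node l r, _ => loU l false ++ loU r true

/-- Leaf orientations of a labeled binary tree. -/
def loB : BT → Bool → List Bool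
  | .leaf, b => [b]
  | .node l _ r, _ => loB l false ++ loB r true

/-- The canopy: orientations of the leaves except the first and the last one. -/
def canU (t : UBT) : List Bool := ((loU t false).drop 1).dropLast

/-- A pair of twin binary trees: same number of nodes and complementary canopies. -/
def IsTwin (J : UBT × UBT) : Prop :=
  sizeU J.1 = sizeU J.2 ∧ (canU J.1).length = (canU J.2).length ∧
    ∀ i < (canU J.1).length, (canU J.1).getD i false ≠ (canU J.2).getD i false

/-- `σ` is (the word of) a permutation of `{1, …, n}`. -/
def IsPerm (n : ℕ) (σ : List ℕ) : Prop := σ.Perm (List.range' 1 n)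

/-- Covering-type step of the right permutohedron (weak) order: exchange of two
adjacent letters `a < b`. -/
def PermutoStep (σ ν : List ℕ) : Prop :=
  ∃ (p s : List ℕ) (a b : ℕ), a < b ∧ σ = p ++ a :: b :: s ∧ ν = p ++ b :: a :: s

/-- The right permutohedron (weak) order. -/
def PermutoLe : List ℕ → List ℕ → Prop := Relation.ReflTransGen PermutoStep

/-- Baxter permutations: avoiding the generalized patterns 2-41-3 and 3-14-2. -/
def IsBaxterPerm (σ : List ℕ) : Prop :=
  ∀ i j k, i < j → j + 1 < k → k < σ.length →
    ¬(σ.getD (j+1) 0 < σ.getD i 0 ∧ σ.getD i 0 < σ.getD k 0 ∧ σ.getD k 0 < σ.getD j 0) ∧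
    ¬(σ.getD j 0 < σ.getD k 0 ∧ σ.getD k 0 < σ.getD i 0 ∧ σ.getD i 0 < σ.getD (j+1) 0)

/-- The free quasi-symmetric functions, modeled as finitely supported functions
on words (the fundamental basis element `F_σ` is `Finsupp.single σ 1`). -/
abbrev FQSym := List ℕ →₀ ℚ

/-- Model for `FQSym ⊗ FQSym`. -/
abbrev FQSym2 := (List ℕ × List ℕ) →₀ ℚ

/-- The list of shuffles of two words. -/
def shuffles : List ℕ → List ℕ → List (List ℕ)
  | [], v => [v]
  | u, [] => [u]
  | a :: u, b :: v =>
      (shuffles u (b :: v)).map (a :: ·) ++ (shuffles (a :: u) v).map (b :: ·)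
termination_by u v => u.length + v.length
decreasing_by all_goals (simp; try omega)

/-- The shifted shuffle of two permutations. -/
def shShuffles (σ ν : List ℕ) : List (List ℕ) := shuffles σ (ν.map (· + σ.length))

/-- The product of FQSym on the fundamental basis: shifted shuffle. -/
noncomputable def fqMul (x y : FQSym) : FQSym :=
  x.sum fun σ a => y.sum fun ν b =>
    ((shShuffles σ ν).map fun π => Finsupp.single π (a * b)).sum

/-- The coproduct of FQSym: deconcatenation followed by standardization. -/
noncomputable def fqCoprod (x : FQSym) : FQSym2 :=
  x.sum fun σ a =>
    ((List.range (σ.length + 1)).map fun i =>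
      Finsupp.single (std (σ.take i), std (σ.drop i)) a).sum

/-- The tensor product of two elements of FQSym, in the model `FQSym2`. -/
noncomputable def fqTensor (x y : FQSym) : FQSym2 :=
  x.sum fun σ a => y.sum fun ν b => Finsupp.single (σ, ν) (a * b)

/-- All permutations of `{1, …, n}` as words. -/
def permsOf (n : ℕ) : List (List ℕ) := (List.range' 1 n).permutations

/-- The basis element `P_J` of Baxter: the sum of `F_σ` over the permutations
of size `n` whose P-symbol has shape `J`. -/
noncomputable def PJ (n : ℕ) (J : UBT × UBT) : FQSym :=
  (((permsOf n).filter fun σ => decide (Pshape σ = J)).map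
    fun σ => Finsupp.single σ (1 : ℚ)).sum

/-- The span of the elements `P_J`. -/
noncomputable def BaxterSpan : Submodule ℚ FQSym :=
  Submodule.span ℚ {x : FQSym | ∃ n J, x = PJ n J}

/-- The span of the tensors `P_J ⊗ P_{J'}`. -/
noncomputable def BaxterSpan2 : Submodule ℚ FQSym2 :=
  Submodule.span ℚ {z : FQSym2 | ∃ n J m J', z = fqTensor (PJ n J) (PJ m J')}

/-! ### In-order reading, relabeling -/

def inord : BT → List ℕ
  | .leaf => []
  | .node l b r => inord l ++ b :: inord r

def mapBT (g : ℕ → ℕ) : BT → BT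
  | .leaf => .leaf
  | .node l b r => .node (mapBT g l) (g b) (mapBT g r)

theorem shape_mapBT (g : ℕ → ℕ) (t : BT) : shape (mapBT g t) = shape t := by
  induction t with
  | leaf => rfl
  | node l b r ihl ihr => simp [mapBT, shape, ihl, ihr]

theorem eq_of_shape_inord (t t' : BT) (h : shape t = shape t') (h' : inord t = inord t') :
    t = t' := by
  have len : ∀ s : BT, (inord s).length = sizeU (shape s) := by
    intro s
    induction s with
    | leaf => rfl
    | node l b r ihl ihr => simp [inord, shape, sizeU, ihl, ihr]; omega
  induction t generalizing t' with
  | leaf => cases t' with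
    | leaf => rfl
    | node l b r => simp [shape] at h
  | node l b r ihl ihr => cases t' with
    | leaf => simp [shape] at h
    | node l' b' r' =>
      simp only [shape, UBT.node.injEq] at h
      simp only [inord] at h'
      have := List.append_inj h' (by rw [len, len, h.1])
      simp only [List.cons.injEq] at this
      rw [ihl l' h.1 this.1, ihr r' h.2 this.2.2, this.2.1]

theorem inord_leafInsL (t : BT) (a : ℕ) : (inord (leafInsL t a)).Perm (a :: inord t) := by
  induction t with
  | leaf => simp [leafInsL, inord]
  | node l b r ihl ihr =>
    simp only [leafInsL]
    split_ifs
    · simp only [inord]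
      exact ihl.append_right _
    · simp only [inord]
      refine (List.Perm.append_left _ ((ihr.cons b).trans (List.Perm.swap _ _ _))).trans ?_
      exact List.perm_middle

theorem inord_split (t : BT) (a : ℕ) :
    (inord (splitLE t a) ++ inord (splitGT t a)).Perm (inord t) := by
  induction t with
  | leaf => simp [splitLE, splitGT, inord]
  | node l b r ihl ihr =>
    simp only [splitLE, splitGT]
    split_ifs
    · simp only [inord, List.append_assoc, List.cons_append]
      exact (ihr.cons b).append_left _
    · simp only [inord]
      rw [← List.append_assoc]
      exact ihl.append_right _

theorem inord_rootIns (t : BT) (a : ℕ) : (inord (rootIns t a)).Perm (a :: inord t) := by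
  simp only [rootIns, inord]
  exact List.perm_middle.trans ((inord_split t a).cons a)

theorem insL_concat (u : List ℕ) (a : ℕ) : insL (u ++ [a]) = leafInsL (insL u) a := by
  simp [insL]

theorem insR_concat (u : List ℕ) (a : ℕ) : insR (u ++ [a]) = rootIns (insR u) a := by
  simp [insR]

theorem inord_insL (u : List ℕ) : (inord (insL u)).Perm u := by
  induction u using List.reverseRecOn with
  | nil => simp [insL, inord]
  | append_singleton u a ih =>
    rw [insL_concat]
    exact (inord_leafInsL _ _).trans ((ih.cons a).trans (List.perm_append_singleton a u).symm)

theorem inord_insR (u : List ℕ) : (inord (insR u)).Perm u := by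
  induction u using List.reverseRecOn with
  | nil => simp [insR, inord]
  | append_singleton u a ih =>
    rw [insR_concat]
    exact (inord_rootIns _ _).trans ((ih.cons a).trans (List.perm_append_singleton a u).symm)

theorem sorted_leafInsL (t : BT) (a : ℕ) (h : (inord t).Pairwise (· ≤ ·)) :
    (inord (leafInsL t a)).Pairwise (· ≤ ·) := by
  induction t with
  | leaf => simp [leafInsL, inord]
  | node l b r ihl ihr =>
    simp only [inord, List.pairwise_append, List.pairwise_cons, List.mem_cons] at h
    obtain ⟨h1, ⟨h2, h3⟩, h4⟩ := h
    have ml : ∀ x, x ∈ inord (leafInsL l a) ↔ x = a ∨ x ∈ inord l := fun x => by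
      rw [(inord_leafInsL l a).mem_iff, List.mem_cons]
    have mr : ∀ x, x ∈ inord (leafInsL r a) ↔ x = a ∨ x ∈ inord r := fun x => by
      rw [(inord_leafInsL r a).mem_iff, List.mem_cons]
    simp only [leafInsL]
    split_ifs with hab
    · simp only [inord, List.pairwise_append, List.pairwise_cons, List.mem_cons, ml]
      refine ⟨ihl h1, ⟨h2, h3⟩, ?_⟩
      rintro x (rfl | hx) y (rfl | hy)
      · omega
      · have := h2 y hy; omega
      · exact h4 x hx _ (Or.inl rfl)
      · exact h4 x hx y (Or.inr hy)
    · simp only [inord, List.pairwise_append, List.pairwise_cons, List.mem_cons, mr]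
      refine ⟨h1, ⟨?_, ihr h3⟩, ?_⟩
      · rintro x (rfl | hx)
        · omega
        · exact h2 x hx
      · rintro x hx y (rfl | rfl | hy)
        · exact h4 x hx _ (Or.inl rfl)
        · have := h4 x hx _ (Or.inl rfl); omega
        · exact h4 x hx y (Or.inr hy)

theorem inord_splitLE (t : BT) (a : ℕ) (h : (inord t).Pairwise (· ≤ ·)) :
    inord (splitLE t a) = (inord t).filter (fun x => decide (x ≤ a)) ∧
    inord (splitGT t a) = (inord t).filter (fun x => decide (a < x)) := by
  induction t with
  | leaf => simp [splitLE, splitGT, inord]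
  | node l b r ihl ihr =>
    simp only [inord, List.pairwise_append, List.pairwise_cons, List.mem_cons] at h
    obtain ⟨h1, ⟨h2, h3⟩, h4⟩ := h
    have h5 : ∀ x ∈ inord l, x ≤ b := fun x hx => h4 x hx b (Or.inl rfl)
    simp only [splitLE, splitGT]
    split_ifs with hb
    · have e1 : (inord l).filter (fun x => decide (x ≤ a)) = inord l :=
        List.filter_eq_self.2 fun x hx => by have := h5 x hx; simp; omega
      have e2 : (inord l).filter (fun x => decide (a < x)) = [] :=
        List.filter_eq_nil_iff.2 fun x hx => by have := h5 x hx; simp; omega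
      simp [inord, List.filter_append, e1, e2, hb, (ihr h3).1, (ihr h3).2]
    · have e1 : (inord r).filter (fun x => decide (x ≤ a)) = [] :=
        List.filter_eq_nil_iff.2 fun x hx => by have := h2 x hx; simp; omega
      have e2 : (inord r).filter (fun x => decide (a < x)) = inord r :=
        List.filter_eq_self.2 fun x hx => by have := h2 x hx; simp; omega
      simp [inord, List.filter_append, e1, e2, hb, (ihl h1).1, (ihl h1).2,
        not_le.1 hb]

theorem sorted_rootIns (t : BT) (a : ℕ) (h : (inord t).Pairwise (· ≤ ·)) :
    (inord (rootIns t a)).Pairwise (· ≤ ·) := by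
  simp only [rootIns, inord, (inord_splitLE t a h).1, (inord_splitLE t a h).2,
    List.pairwise_append, List.pairwise_cons, List.mem_cons, List.mem_filter, decide_eq_true_eq]
  refine ⟨h.filter _, ⟨fun x hx => hx.2.le, h.filter _⟩, ?_⟩
  rintro x ⟨_, hx⟩ y (rfl | ⟨_, hy⟩)
  · exact hx
  · omega

theorem sorted_insL (u : List ℕ) : (inord (insL u)).Pairwise (· ≤ ·) := by
  induction u using List.reverseRecOn with
  | nil => simp [insL, inord]
  | append_singleton u a ih => rw [insL_concat]; exact sorted_leafInsL _ _ ih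

theorem sorted_insR (u : List ℕ) : (inord (insR u)).Pairwise (· ≤ ·) := by
  induction u using List.reverseRecOn with
  | nil => simp [insR, inord]
  | append_singleton u a ih => rw [insR_concat]; exact sorted_rootIns _ _ ih

/-- On words with the same letters, the shape of the P-symbol determines the P-symbol. -/
theorem psymb_of_pshape (u u' : List ℕ) (h : u.Perm u') (hs : Pshape u = Pshape u') :
    insL u = insL u' ∧ insR u = insR u' := by
  simp only [Pshape, Prod.mk.injEq] at hs
  constructor
  · refine eq_of_shape_inord _ _ hs.1 ?_
    exact ((inord_insL u).trans (h.trans (inord_insL u').symm)).eq_of_pairwise'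
      (sorted_insL u) (sorted_insL u')
  · refine eq_of_shape_inord _ _ hs.2 ?_
    exact ((inord_insR u).trans (h.trans (inord_insR u').symm)).eq_of_pairwise'
      (sorted_insR u) (sorted_insR u')

theorem leafInsL_mapBT (g : ℕ → ℕ) (t : BT) (a : ℕ) (h : ∀ b ∈ inord t, (g a < g b ↔ a < b)) :
    leafInsL (mapBT g t) (g a) = mapBT g (leafInsL t a) := by
  induction t with
  | leaf => rfl
  | node l b r ihl ihr =>
    simp only [inord, List.mem_append, List.mem_cons] at h
    simp only [leafInsL, mapBT, h b (Or.inr (Or.inl rfl))]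
    split_ifs
    · rw [ihl fun x hx => h x (Or.inl hx)]; rfl
    · rw [ihr fun x hx => h x (Or.inr (Or.inr hx))]; rfl

theorem split_mapBT (g : ℕ → ℕ) (t : BT) (a : ℕ) (h : ∀ b ∈ inord t, (g b ≤ g a ↔ b ≤ a)) :
    splitLE (mapBT g t) (g a) = mapBT g (splitLE t a) ∧
    splitGT (mapBT g t) (g a) = mapBT g (splitGT t a) := by
  induction t with
  | leaf => exact ⟨rfl, rfl⟩
  | node l b r ihl ihr =>
    simp only [inord, List.mem_append, List.mem_cons] at h
    have i1 := ihl fun x hx => h x (Or.inl hx)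
    have i2 := ihr fun x hx => h x (Or.inr (Or.inr hx))
    simp only [splitLE, splitGT, mapBT, h b (Or.inr (Or.inl rfl))]
    split_ifs
    · simp [mapBT, i2.1, i2.2]
    · simp [mapBT, i1.1, i1.2]

theorem ins_map (g : ℕ → ℕ) (u : List ℕ) (h : ∀ a ∈ u, ∀ b ∈ u, (g a < g b ↔ a < b)) :
    insL (u.map g) = mapBT g (insL u) ∧ insR (u.map g) = mapBT g (insR u) := by
  induction u using List.reverseRecOn with
  | nil => exact ⟨rfl, rfl⟩
  | append_singleton u a ih =>
    have ih' := ih fun a ha b hb => h a (by simp [ha]) b (by simp [hb])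
    rw [List.map_append, List.map_singleton, insL_concat, insR_concat, insL_concat, insR_concat,
      ih'.1, ih'.2]
    refine ⟨leafInsL_mapBT _ _ _ fun b hb => h a (by simp) b ?_, ?_⟩
    · simp [(inord_insL u).mem_iff.1 hb]
    · have hb : ∀ b ∈ inord (insR u), (g b ≤ g a ↔ b ≤ a) := fun b hb => by
        have := h a (by simp) b (by simp [(inord_insR u).mem_iff.1 hb])
        rw [← not_lt, ← not_lt, this]
      simp [rootIns, mapBT, (split_mapBT g _ a hb).1, (split_mapBT g _ a hb).2]

theorem pshape_map (g : ℕ → ℕ) (u : List ℕ) (h : ∀ a ∈ u, ∀ b ∈ u, (g a < g b ↔ a < b)) :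
    Pshape (u.map g) = Pshape u := by
  simp [Pshape, (ins_map g u h).1, (ins_map g u h).2, shape_mapBT]

/-! ### Restriction to an interval of the alphabet -/

theorem splitLE_leafInsL (t : BT) (a n : ℕ) :
    splitLE (leafInsL t a) n = if a ≤ n then leafInsL (splitLE t n) a else splitLE t n := by
  induction t with
  | leaf => simp only [leafInsL, splitLE]
  | node l b r ihl ihr =>
    grind [leafInsL, splitLE]

theorem splitGT_leafInsL (t : BT) (a n : ℕ) :
    splitGT (leafInsL t a) n = if a ≤ n then splitGT t n else leafInsL (splitGT t n) a := by
  induction t with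
  | leaf => simp only [leafInsL, splitGT]
  | node l b r ihl ihr =>
    grind [leafInsL, splitGT]

theorem splitLE_splitLE (t : BT) (a n : ℕ) (h : a ≤ n) :
    splitLE (splitLE t n) a = splitLE t a ∧ splitLE (splitLE t a) n = splitLE t a := by
  induction t with
  | leaf => exact ⟨rfl, rfl⟩
  | node l b r ihl ihr =>
    grind [splitLE]

theorem splitGT_splitGT (t : BT) (a n : ℕ) (h : a ≤ n) :
    splitGT (splitGT t n) a = splitGT t n ∧ splitGT (splitGT t a) n = splitGT t n := by
  induction t with
  | leaf => exact ⟨rfl, rfl⟩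
  | node l b r ihl ihr =>
    grind [splitGT]

theorem splitGT_splitLE (t : BT) (a n : ℕ) (h : a ≤ n) :
    splitGT (splitLE t n) a = splitLE (splitGT t a) n := by
  induction t with
  | leaf => rfl
  | node l b r ihl ihr =>
    grind [splitLE, splitGT]

theorem splitLE_rootIns (t : BT) (a n : ℕ) :
    splitLE (rootIns t a) n = if a ≤ n then rootIns (splitLE t n) a else splitLE t n := by
  simp only [rootIns, splitLE]
  split_ifs with h
  · rw [(splitLE_splitLE t a n h).1, splitGT_splitLE t a n h]
  · rw [(splitLE_splitLE t n a (by omega)).1]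

theorem splitGT_rootIns (t : BT) (a n : ℕ) :
    splitGT (rootIns t a) n = if a ≤ n then splitGT t n else rootIns (splitGT t n) a := by
  simp only [rootIns, splitGT]
  split_ifs with h
  · rw [(splitGT_splitGT t a n h).2]
  · rw [(splitGT_splitGT t n a (by omega)).2, splitGT_splitLE t n a (by omega)]

theorem ins_filter (u : List ℕ) (n : ℕ) :
    (insL (u.filter fun x => decide (x ≤ n)) = splitLE (insL u) n ∧
     insL (u.filter fun x => decide (n < x)) = splitGT (insL u) n) ∧
    (insR (u.filter fun x => decide (x ≤ n)) = splitLE (insR u) n ∧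
     insR (u.filter fun x => decide (n < x)) = splitGT (insR u) n) := by
  induction u using List.reverseRecOn with
  | nil => exact ⟨⟨rfl, rfl⟩, ⟨rfl, rfl⟩⟩
  | append_singleton u a ih =>
    obtain ⟨⟨h1, h2⟩, h3, h4⟩ := ih
    rw [insL_concat, insR_concat, splitLE_leafInsL, splitGT_leafInsL, splitLE_rootIns,
      splitGT_rootIns, ← h1, ← h2, ← h3, ← h4]
    by_cases h : a ≤ n
    · simp [List.filter_append, h, insL_concat, insR_concat, not_lt.2 h]
    · simp [List.filter_append, h, insL_concat, insR_concat, not_le.1 h]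

theorem pshape_filter (u u' : List ℕ) (h : u.Perm u') (hs : Pshape u = Pshape u') (n : ℕ) :
    Pshape (u.filter fun x => decide (x ≤ n)) = Pshape (u'.filter fun x => decide (x ≤ n)) ∧
    Pshape (u.filter fun x => decide (n < x)) = Pshape (u'.filter fun x => decide (n < x)) := by
  obtain ⟨h1, h2⟩ := psymb_of_pshape u u' h hs
  obtain ⟨⟨a1, a2⟩, a3, a4⟩ := ins_filter u n
  obtain ⟨⟨b1, b2⟩, b3, b4⟩ := ins_filter u' n
  simp [Pshape, a1, a2, a3, a4, b1, b2, b3, b4, h1, h2]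

/-! ### Compatibility with concatenation -/

def splitLT : BT → ℕ → BT
  | .leaf, _ => .leaf
  | .node l b r, a => if b < a then .node l b (splitLT r a) else splitLT l a

def splitGE : BT → ℕ → BT
  | .leaf, _ => .leaf
  | .node l b r, a => if b < a then splitGE r a else .node (splitGE l a) b r

theorem splitLT_leafInsL (t : BT) (a n : ℕ) :
    splitLT (leafInsL t a) n = if a < n then leafInsL (splitLT t n) a else splitLT t n := by
  induction t with
  | leaf => simp only [leafInsL, splitLT]
  | node l b r ihl ihr =>
    grind [leafInsL, splitLT]

theorem splitGE_leafInsL (t : BT) (a n : ℕ) :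
    splitGE (leafInsL t a) n = if a < n then splitGE t n else leafInsL (splitGE t n) a := by
  induction t with
  | leaf => simp only [leafInsL, splitGE]
  | node l b r ihl ihr =>
    grind [leafInsL, splitGE]

def graftL : BT → BT → BT
  | .leaf, s => s
  | .node l b r, s => .node (graftL l (splitLT s b)) b (graftL r (splitGE s b))

def graftR : BT → BT → BT
  | .leaf, t => t
  | .node l b r, t => .node (graftR l (splitLE t b)) b (graftR r (splitGT t b))

theorem graftL_leafInsL (t s : BT) (a : ℕ) :
    graftL t (leafInsL s a) = leafInsL (graftL t s) a := by
  induction t generalizing s with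
  | leaf => rfl
  | node l b r ihl ihr =>
    simp only [graftL, leafInsL, splitLT_leafInsL, splitGE_leafInsL]
    split_ifs
    · rw [ihl]
    · rw [ihr]

theorem graftL_leaf (t : BT) : graftL t .leaf = t := by
  induction t with
  | leaf => rfl
  | node l b r ihl ihr => simp [graftL, splitLT, splitGE, ihl, ihr]

theorem insL_append (u v : List ℕ) : insL (u ++ v) = graftL (insL u) (insL v) := by
  induction v using List.reverseRecOn with
  | nil => simp [insL, graftL_leaf]
  | append_singleton v a ih =>
    rw [← List.append_assoc, insL_concat, insL_concat, ih, graftL_leafInsL]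

theorem split_graftR (s t : BT) (a : ℕ) :
    splitLE (graftR s t) a = graftR (splitLE s a) (splitLE t a) ∧
    splitGT (graftR s t) a = graftR (splitGT s a) (splitGT t a) := by
  induction s generalizing t with
  | leaf => exact ⟨rfl, rfl⟩
  | node l b r ihl ihr =>
    simp only [graftR, splitLE, splitGT]
    split_ifs with h
    · simp only [graftR, (ihr _).1, (ihr _).2, (splitLE_splitLE t b a h).1,
        splitGT_splitLE t b a h, (splitGT_splitGT t b a h).2, and_self]
    · have h : a ≤ b := by omega
      simp only [graftR, (ihl _).1, (ihl _).2, (splitLE_splitLE t a b h).1,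
        splitGT_splitLE t a b h, (splitGT_splitGT t a b h).2, and_self]

theorem insR_append (u v : List ℕ) : insR (u ++ v) = graftR (insR v) (insR u) := by
  induction v using List.reverseRecOn with
  | nil => simp [insR, graftR]
  | append_singleton v a ih =>
    rw [← List.append_assoc, insR_concat, insR_concat, ih]
    simp [rootIns, graftR, (split_graftR _ _ a).1, (split_graftR _ _ a).2]

theorem pshape_append (u u' v v' : List ℕ) (h : u.Perm u') (hs : Pshape u = Pshape u')
    (k : v.Perm v') (ks : Pshape v = Pshape v') : Pshape (u ++ v) = Pshape (u' ++ v') := by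
  obtain ⟨h1, h2⟩ := psymb_of_pshape u u' h hs
  obtain ⟨h3, h4⟩ := psymb_of_pshape v v' k ks
  simp [Pshape, insL_append, insR_append, h1, h2, h3, h4]

/-! ### Standardization -/

def rk (A : Finset ℕ) (x : ℕ) : ℕ := (A.filter (· < x)).card + 1

theorem std_eq (u : List ℕ) (hu : u.Nodup) : std u = u.map (rk u.toFinset) := by
  apply List.ext_getElem
  · simp [std]
  intro i h1 h2
  have hi : i < u.length := by simpa [std] using h1
  have e : u = (List.range u.length).map fun j => u.getD j 0 := by
    apply List.ext_getElem
    · simp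
    · intro j h1 h2
      simp [h1]
  have e2 : (u.toFinset.filter (· < u[i])).card = (u.filter fun x => decide (x < u[i])).length := by
    rw [← List.toFinset_card_of_nodup (hu.filter _), List.toFinset_filter]
    simp
  simp only [std, List.getElem_map, List.getElem_range, rk, Nat.add_right_cancel_iff]
  rw [e2]
  generalize hc : u[i] = c
  conv_rhs => rw [e]
  rw [List.filter_map, List.length_map]
  congr 1
  apply List.filter_congr
  intro j hj
  have hj : j < u.length := by simpa using hj
  simp only [List.getD_eq_getElem, hi, hj, Function.comp, ← hc]
  rw [decide_eq_decide]
  constructor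
  · rintro (h | ⟨h, h'⟩)
    · exact h
    · have := (hu.getElem_inj_iff).1 h
      omega
  · exact Or.inl

theorem rk_lt (A : Finset ℕ) (a b : ℕ) (ha : a ∈ A) (hb : b ∈ A) : rk A a < rk A b ↔ a < b := by
  have mono : ∀ x y, x ≤ y → rk A x ≤ rk A y := fun x y h => by
    unfold rk
    gcongr with z
  refine ⟨fun h => ?_, fun h => ?_⟩
  · by_contra h'
    have := mono b a (by omega)
    omega
  · unfold rk
    gcongr 1
    apply Finset.card_lt_card
    rw [Finset.ssubset_iff_of_subset]
    · exact ⟨a, by simp [ha, h], by simp⟩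
    · intro z
      simp only [Finset.mem_filter]
      rintro ⟨h1, h2⟩
      exact ⟨h1, h2.trans h⟩

theorem rk_injOn (A : Finset ℕ) : Set.InjOn (rk A) A := by
  intro a ha b hb h
  have h1 := rk_lt A a b ha hb
  have h2 := rk_lt A b a hb ha
  omega

theorem rk_image (A : Finset ℕ) : A.image (rk A) = Finset.Icc 1 A.card := by
  apply Finset.eq_of_subset_of_card_le
  · intro x hx
    obtain ⟨a, ha, rfl⟩ := Finset.mem_image.1 hx
    rw [Finset.mem_Icc]
    refine ⟨by simp [rk], ?_⟩
    unfold rk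
    apply Finset.card_lt_card
    rw [Finset.ssubset_iff_of_subset (Finset.filter_subset _ _)]
    exact ⟨a, ha, by simp⟩
  · rw [Finset.card_image_of_injOn (rk_injOn A)]
    simp

/-! ### Permutations as words -/

def permsF (n : ℕ) : Finset (List ℕ) := (permsOf n).toFinset

theorem mem_permsF (n : ℕ) (σ : List ℕ) : σ ∈ permsF n ↔ σ.Nodup ∧ σ.toFinset = Finset.Icc 1 n := by
  have e : (List.range' 1 n).toFinset = Finset.Icc 1 n := by
    ext x; simp; omega
  have nd : (List.range' 1 n).Nodup := List.nodup_range'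
  rw [permsF, List.mem_toFinset, permsOf, List.mem_permutations, ← e]
  constructor
  · intro h
    exact ⟨h.nodup_iff.2 nd, List.toFinset_eq_of_perm _ _ h⟩
  · rintro ⟨h1, h2⟩
    exact List.perm_of_nodup_nodup_toFinset_eq h1 nd h2

def cls (n : ℕ) (J : UBT × UBT) : Finset (List ℕ) := (permsF n).filter fun σ => Pshape σ = J

theorem PJ_eq (n : ℕ) (J : UBT × UBT) :
    PJ n J = ∑ σ ∈ cls n J, Finsupp.single σ (1 : ℚ) := by
  have nd : (permsOf n).Nodup := List.nodup_permutations _ List.nodup_range'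
  rw [PJ, ← List.sum_toFinset _ (nd.filter _), List.toFinset_filter]
  simp [cls, permsF]

theorem len_of_mem {n : ℕ} {σ : List ℕ} (h : σ ∈ permsF n) : σ.length = n := by
  obtain ⟨h1, h2⟩ := (mem_permsF n σ).1 h
  rw [← List.toFinset_card_of_nodup h1, h2]; simp

/-- The lift of a permutation to a word on the letters in `A`. -/
theorem exists_lift (A : Finset ℕ) (α : List ℕ) (h : α ∈ permsF A.card) :
    ∃ u : List ℕ, u.Nodup ∧ u.toFinset = A ∧ std u = α ∧ Pshape u = Pshape α := by
  obtain ⟨h1, h2⟩ := (mem_permsF _ _).1 h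
  have hsurj : ∀ x ∈ α, ∃ a ∈ (A : Set ℕ), rk A a = x := fun x hx => by
    have : x ∈ A.image (rk A) := by rw [rk_image, ← h2]; simpa using hx
    simpa using this
  set f := Function.invFunOn (rk A) (A : Set ℕ) with hf
  have hfA : ∀ x ∈ α, f x ∈ A := fun x hx => Function.invFunOn_mem (hsurj x hx)
  have hff : ∀ x ∈ α, rk A (f x) = x := fun x hx => Function.invFunOn_eq (hsurj x hx)
  have nd : (α.map f).Nodup := by
    refine List.Nodup.map_on ?_ h1
    intro x hx y hy hxy
    rw [← hff x hx, ← hff y hy, hxy]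
  have hA : (α.map f).toFinset = A := by
    apply Finset.eq_of_subset_of_card_le
    · intro x hx
      simp only [List.mem_toFinset, List.mem_map] at hx
      obtain ⟨y, hy, rfl⟩ := hx
      exact hfA y hy
    · rw [List.toFinset_card_of_nodup nd, List.length_map, len_of_mem h]
  have hm : (α.map f).map (rk A) = α := by
    rw [List.map_map]
    conv_rhs => rw [← List.map_id α]
    apply List.map_congr_left
    intro x hx
    exact hff x hx
  refine ⟨α.map f, nd, hA, ?_, ?_⟩
  · rw [std_eq _ nd, hA, hm]
  · refine Eq.trans (Eq.symm ?_) (congrArg Pshape hm)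
    refine pshape_map _ _ ?_
    intro a ha b hb
    exact rk_lt A a b (by rw [← hA]; simpa using ha) (by rw [← hA]; simpa using hb)

theorem std_mem (u : List ℕ) (hu : u.Nodup) : std u ∈ cls u.length (Pshape u) := by
  rw [cls, Finset.mem_filter, std_eq u hu]
  have hlt : ∀ a ∈ u, ∀ b ∈ u, (rk u.toFinset a < rk u.toFinset b ↔ a < b) :=
    fun a ha b hb => rk_lt _ a b (by simpa using ha) (by simpa using hb)
  refine ⟨(mem_permsF _ _).2 ⟨?_, ?_⟩, pshape_map _ _ hlt⟩
  · refine List.Nodup.map_on ?_ hu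
    intro x hx y hy hxy
    exact rk_injOn u.toFinset (by simpa using hx) (by simpa using hy) hxy
  · rw [← List.toFinset_card_of_nodup hu, ← rk_image]
    ext; simp

theorem std_inj (u v : List ℕ) (hu : u.Nodup) (hv : v.Nodup) (h : u.toFinset = v.toFinset)
    (e : std u = std v) : u = v := by
  rw [std_eq u hu, std_eq v hv, h] at e
  have key : ∀ w : List ℕ, w.toFinset = v.toFinset →
      (w.map (rk v.toFinset)).map (Function.invFunOn (rk v.toFinset) (v.toFinset : Set ℕ)) = w := by
    intro w hw
    rw [List.map_map]
    conv_rhs => rw [← List.map_id w]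
    apply List.map_congr_left
    intro x hx
    have hx' : x ∈ v.toFinset := by rw [← hw]; simpa using hx
    exact (rk_injOn v.toFinset).leftInvOn_invFunOn hx'
  rw [← key u h, e, key v rfl]

/-! ### Shuffles -/

theorem shuffles_nodup_mem (n : ℕ) (u v : List ℕ) (hu : ∀ x ∈ u, x ≤ n) (hv : ∀ x ∈ v, n < x) :
    (shuffles u v).Nodup ∧ ∀ π, π ∈ shuffles u v ↔
      (π.filter (fun x => decide (x ≤ n)) = u ∧ π.filter (fun x => decide (n < x)) = v) := by
  fun_induction shuffles u v with
  | case1 v =>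
    refine ⟨by simp, fun π => ?_⟩
    simp only [List.mem_singleton]
    constructor
    · rintro rfl
      refine ⟨List.filter_eq_nil_iff.2 fun x hx => ?_, List.filter_eq_self.2 fun x hx => ?_⟩ <;>
      · have := hv x hx; simp; omega
    · rintro ⟨h1, h2⟩
      rw [← h2, eq_comm, List.filter_eq_self]
      intro x hx
      have := List.filter_eq_nil_iff.1 h1 x hx
      simp at this ⊢; omega
  | case2 u hne =>
    refine ⟨by simp, fun π => ?_⟩
    simp only [List.mem_singleton]
    constructor
    · rintro rfl
      refine ⟨List.filter_eq_self.2 fun x hx => ?_, List.filter_eq_nil_iff.2 fun x hx => ?_⟩ <;>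
      · have := hu x hx; simp; omega
    · rintro ⟨h1, h2⟩
      rw [← h1, eq_comm, List.filter_eq_self]
      intro x hx
      have := List.filter_eq_nil_iff.1 h2 x hx
      simp at this ⊢; omega
  | case3 a u b v ih1 ih2 =>
    have ha : a ≤ n := hu a (by simp)
    have hb : n < b := hv b (by simp)
    obtain ⟨n1, m1⟩ := ih1 (fun x hx => hu x (by simp [hx])) hv
    obtain ⟨n2, m2⟩ := ih2 hu (fun x hx => hv x (by simp [hx]))
    constructor
    · rw [List.nodup_append]
      refine ⟨n1.map (List.cons_injective), n2.map (List.cons_injective), ?_⟩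
      intro x hx y hy
      simp only [List.mem_map] at hx hy
      obtain ⟨x', _, rfl⟩ := hx
      obtain ⟨y', _, rfl⟩ := hy
      intro h
      simp only [List.cons.injEq] at h
      omega
    · intro π
      simp only [List.mem_append, List.mem_map, m1, m2]
      constructor
      · rintro (⟨x, ⟨h1, h2⟩, rfl⟩ | ⟨x, ⟨h1, h2⟩, rfl⟩)
        · simp [ha, h1, h2, not_lt.2 ha]
        · simp [hb, h1, h2, not_le.2 hb]
      · rintro ⟨h1, h2⟩
        cases π with
        | nil => simp at h1
        | cons c π =>
          by_cases hc : c ≤ n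
          · left
            simp only [List.filter_cons, hc, decide_true, if_true, not_lt.2 hc, decide_false,
              List.cons.injEq] at h1 h2
            exact ⟨π, ⟨h1.2, by simpa using h2⟩, by rw [h1.1]⟩
          · right
            simp only [List.filter_cons, hc, decide_true, if_true, not_le.1 hc, decide_false,
              List.cons.injEq] at h1 h2
            exact ⟨π, ⟨by simpa using h1, h2.2⟩, by rw [h2.1]⟩

/-! ### Linear structure -/

noncomputable def mulL : FQSym →ₗ[ℚ] FQSym →ₗ[ℚ] FQSym :=
  Finsupp.linearCombination ℚ fun σ => Finsupp.linearCombination ℚ fun ν =>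
    ((shShuffles σ ν).map fun π => (Finsupp.single π (1 : ℚ) : FQSym)).sum

theorem fqMul_eq (x y : FQSym) : fqMul x y = mulL x y := by
  simp only [fqMul, mulL, Finsupp.linearCombination_apply, Finsupp.sum, LinearMap.sum_apply,
    LinearMap.smul_apply, Finset.smul_sum, smul_smul, List.smul_sum, List.map_map]
  simp [Function.comp_def]

noncomputable def coL : FQSym →ₗ[ℚ] FQSym2 :=
  Finsupp.linearCombination ℚ fun σ =>
    ((List.range (σ.length + 1)).map fun i =>
      (Finsupp.single (std (σ.take i), std (σ.drop i)) (1 : ℚ) : FQSym2)).sum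

theorem fqCoprod_eq (x : FQSym) : fqCoprod x = coL x := by
  simp only [fqCoprod, coL, Finsupp.linearCombination_apply, Finsupp.sum, List.smul_sum,
    List.map_map]
  simp [Function.comp_def]

noncomputable def tenL : FQSym →ₗ[ℚ] FQSym →ₗ[ℚ] FQSym2 :=
  Finsupp.linearCombination ℚ fun σ => Finsupp.linearCombination ℚ fun ν =>
    (Finsupp.single (σ, ν) (1 : ℚ) : FQSym2)

theorem fqTensor_eq (x y : FQSym) : fqTensor x y = tenL x y := by
  simp only [fqTensor, tenL, Finsupp.linearCombination_apply, Finsupp.sum, LinearMap.sum_apply,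
    LinearMap.smul_apply, Finset.smul_sum, smul_smul]
  simp

theorem fqTensor_PJ (n m : ℕ) (J J' : UBT × UBT) : fqTensor (PJ n J) (PJ m J') =
    ∑ p ∈ cls n J ×ˢ cls m J', (Finsupp.single p (1 : ℚ) : FQSym2) := by
  rw [fqTensor_eq, PJ_eq, PJ_eq, map_sum tenL, LinearMap.sum_apply, Finset.sum_product]
  refine Finset.sum_congr rfl fun σ _ => ?_
  rw [map_sum]
  refine Finset.sum_congr rfl fun ν _ => ?_
  simp [tenL]

/-! ### Product -/

/-- Permutations of size `n + m` whose two restrictions lie in prescribed classes. -/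
def prodSet (n m : ℕ) (J J' : UBT × UBT) : Finset (List ℕ) :=
  (permsF (n + m)).filter fun π =>
    Pshape (π.filter fun x => decide (x ≤ n)) = J ∧ Pshape (π.filter fun x => decide (n < x)) = J'

theorem perm_of_mem {n : ℕ} {σ τ : List ℕ} (h : σ ∈ permsF n) (h' : τ ∈ permsF n) :
    σ.Perm τ := by
  obtain ⟨h1, h2⟩ := (mem_permsF _ _).1 h
  obtain ⟨h3, h4⟩ := (mem_permsF _ _).1 h'
  exact List.perm_of_nodup_nodup_toFinset_eq h1 h3 (h2.trans h4.symm)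

theorem prodSet_mem_span (n m : ℕ) (J J' : UBT × UBT) :
    ∑ π ∈ prodSet n m J J', (Finsupp.single π (1 : ℚ) : FQSym) ∈ BaxterSpan := by
  rw [← Finset.sum_fiberwise_of_maps_to (t := (prodSet n m J J').image Pshape) (g := Pshape)
    fun π hπ => Finset.mem_image_of_mem _ hπ]
  refine Submodule.sum_mem _ fun K hK => ?_
  obtain ⟨π₀, h0, rfl⟩ := Finset.mem_image.1 hK
  simp only [prodSet, Finset.mem_filter] at h0
  obtain ⟨h1, h2, h3⟩ := h0
  have : (prodSet n m J J').filter (fun π => Pshape π = Pshape π₀) = cls (n + m) (Pshape π₀) := by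
    ext π
    simp only [prodSet, cls, Finset.mem_filter]
    refine ⟨fun h => ⟨h.1.1, h.2⟩, fun h => ⟨⟨h.1, ?_⟩, h.2⟩⟩
    obtain ⟨e1, e2⟩ := pshape_filter π π₀ (perm_of_mem h.1 h1) h.2 n
    exact ⟨e1.trans h2, e2.trans h3⟩
  rw [this, ← PJ_eq]
  exact Submodule.subset_span ⟨_, _, rfl⟩

theorem shift_mem (n m : ℕ) (w : List ℕ) (nd : w.Nodup) (h : w.toFinset = Finset.Icc (n + 1) (n + m)) :
    w.map (· - n) ∈ cls m (Pshape w) := by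
  have hm : ∀ x ∈ w, n + 1 ≤ x ∧ x ≤ n + m := fun x hx => by
    rw [← Finset.mem_Icc, ← h]; simpa using hx
  rw [cls, Finset.mem_filter, mem_permsF]
  refine ⟨⟨?_, ?_⟩, ?_⟩
  · refine List.Nodup.map_on ?_ nd
    intro x hx y hy hxy
    have := hm x hx; have := hm y hy
    omega
  · ext y
    have := Finset.ext_iff.1 h (y + n)
    simp only [List.mem_toFinset, Finset.mem_Icc, List.mem_map] at this ⊢
    constructor
    · rintro ⟨x, hx, rfl⟩
      have := hm x hx
      omega
    · intro hy
      exact ⟨y + n, this.2 (by omega), by omega⟩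
  · refine pshape_map _ _ fun a ha b hb => ?_
    have := hm a ha; have := hm b hb
    omega

theorem prodSet_fiber (n m : ℕ) (J J' : UBT × UBT) (σ ν : List ℕ) (hσ : σ ∈ cls n J)
    (hν : ν ∈ cls m J') :
    (prodSet n m J J').filter (fun π => (π.filter (fun x => decide (x ≤ n)),
      (π.filter (fun x => decide (n < x))).map (· - n)) = (σ, ν)) = (shShuffles σ ν).toFinset ∧
    (shShuffles σ ν).Nodup := by
  simp only [cls, Finset.mem_filter] at hσ hν
  obtain ⟨hσ, rfl⟩ := hσ
  obtain ⟨hν, rfl⟩ := hν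
  have hl := len_of_mem hσ
  obtain ⟨s1, s2⟩ := (mem_permsF _ _).1 hσ
  obtain ⟨v1, v2⟩ := (mem_permsF _ _).1 hν
  have ms : ∀ x, x ∈ σ ↔ 1 ≤ x ∧ x ≤ n := fun x => by
    rw [← List.mem_toFinset, s2, Finset.mem_Icc]
  have mv : ∀ x, x ∈ ν ↔ 1 ≤ x ∧ x ≤ m := fun x => by
    rw [← List.mem_toFinset, v2, Finset.mem_Icc]
  obtain ⟨nd, mem⟩ := shuffles_nodup_mem n σ (ν.map (· + n)) (fun x hx => ((ms x).1 hx).2)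
    (fun x hx => by
      obtain ⟨y, hy, rfl⟩ := List.mem_map.1 hx
      have := (mv y).1 hy
      omega)
  rw [shShuffles, hl]
  refine ⟨?_, nd⟩
  ext π
  rw [List.mem_toFinset, mem, Finset.mem_filter, Prod.mk.injEq]
  constructor
  · rintro ⟨_, h1, h2⟩
    refine ⟨h1, ?_⟩
    rw [← h2, List.map_map]
    conv_lhs => rw [← List.map_id (π.filter _)]
    apply List.map_congr_left
    intro x hx
    have : n < x := by simpa using (List.mem_filter.1 hx).2
    simp; omega
  · rintro ⟨h1, h2⟩
    have e : (ν.map (· + n)).map (· - n) = ν := by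
      rw [List.map_map]
      simp [Function.comp_def]
    refine ⟨?_, h1, by rw [h2, e]⟩
    rw [prodSet, Finset.mem_filter, h1, h2]
    refine ⟨?_, rfl, pshape_map _ _ fun a _ b _ => by omega⟩
    have hp : (σ ++ ν.map (· + n)).Perm π := by
      have := List.filter_append_perm (fun x => decide (x ≤ n)) π
      have e3 : π.filter (fun x => !decide (x ≤ n)) = π.filter (fun x => decide (n < x)) := by
        apply List.filter_congr
        intro x _
        by_cases hx : x ≤ n
        · simp [hx]
        · simp [hx, not_le.1 hx]
      rwa [e3, h1, h2] at this
    rw [mem_permsF, ← hp.nodup_iff, ← List.toFinset_eq_of_perm _ _ hp]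
    constructor
    · rw [List.nodup_append]
      refine ⟨s1, v1.map (fun a b h => by simpa using h), ?_⟩
      intro x hx y hy
      obtain ⟨z, hz, rfl⟩ := List.mem_map.1 hy
      have := (mv z).1 hz
      have := (ms x).1 hx
      omega
    · ext x
      simp only [List.mem_toFinset, List.mem_append, List.mem_map, ms, mv, Finset.mem_Icc]
      constructor
      · rintro (h | ⟨z, hz, rfl⟩) <;> omega
      · intro h
        by_cases hx : x ≤ n
        · exact Or.inl ⟨h.1, hx⟩
        · exact Or.inr ⟨x - n, by omega, by omega⟩

theorem prodSet_maps (n m : ℕ) (J J' : UBT × UBT) (π : List ℕ) (h : π ∈ prodSet n m J J') :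
    (π.filter (fun x => decide (x ≤ n)), (π.filter (fun x => decide (n < x))).map (· - n)) ∈
      cls n J ×ˢ cls m J' := by
  rw [prodSet, Finset.mem_filter] at h
  obtain ⟨h, rfl, rfl⟩ := h
  obtain ⟨h1, h2⟩ := (mem_permsF _ _).1 h
  have hm : ∀ x, x ∈ π ↔ 1 ≤ x ∧ x ≤ n + m := fun x => by
    rw [← List.mem_toFinset, h2, Finset.mem_Icc]
  rw [Finset.mem_product]
  constructor
  · rw [cls, Finset.mem_filter, mem_permsF]
    refine ⟨⟨h1.filter _, ?_⟩, rfl⟩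
    ext x
    simp [hm]; omega
  · refine shift_mem n m _ (h1.filter _) ?_
    ext x
    simp [hm]; omega

theorem mul_PJ (n m : ℕ) (J J' : UBT × UBT) : mulL (PJ n J) (PJ m J') ∈ BaxterSpan := by
  have : mulL (PJ n J) (PJ m J') = ∑ π ∈ prodSet n m J J', (Finsupp.single π (1 : ℚ) : FQSym) := by
    rw [← Finset.sum_fiberwise_of_maps_to (prodSet_maps n m J J'), Finset.sum_product,
      PJ_eq, PJ_eq, map_sum mulL, LinearMap.sum_apply]
    refine Finset.sum_congr rfl fun σ hσ => ?_
    rw [map_sum]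
    refine Finset.sum_congr rfl fun ν hν => ?_
    obtain ⟨h1, h2⟩ := prodSet_fiber n m J J' σ ν hσ hν
    rw [h1, List.sum_toFinset _ h2]
    simp [mulL]
  rw [this]
  exact prodSet_mem_span n m J J'

/-! ### Coproduct -/

theorem co_fiber (n i : ℕ) (hi : i ≤ n) (σ₀ : List ℕ) (h0 : σ₀ ∈ permsF n) :
    ∑ σ ∈ (cls n (Pshape σ₀)).filter (fun σ =>
      ((σ.take i).toFinset, Pshape (σ.take i), Pshape (σ.drop i)) =
      ((σ₀.take i).toFinset, Pshape (σ₀.take i), Pshape (σ₀.drop i))),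
      (Finsupp.single (std (σ.take i), std (σ.drop i)) (1 : ℚ) : FQSym2) =
    fqTensor (PJ i (Pshape (σ₀.take i))) (PJ (n - i) (Pshape (σ₀.drop i))) := by
  have hl0 := len_of_mem h0
  obtain ⟨z1, z2⟩ := (mem_permsF _ _).1 h0
  have dropSet : ∀ σ : List ℕ, σ ∈ permsF n → (σ.take i).toFinset = (σ₀.take i).toFinset →
      (σ.drop i).toFinset = (σ₀.drop i).toFinset := by
    have key : ∀ σ : List ℕ, σ ∈ permsF n →
        (σ.drop i).toFinset = Finset.Icc 1 n \ (σ.take i).toFinset := by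
      intro σ hσ
      obtain ⟨s1, s2⟩ := (mem_permsF _ _).1 hσ
      rw [← List.take_append_drop i σ, List.nodup_append] at s1
      rw [← s2]
      conv_rhs => rw [← List.take_append_drop i σ, List.toFinset_append]
      ext x
      simp only [Finset.mem_sdiff, Finset.mem_union, List.mem_toFinset, List.take_append_drop]
      constructor
      · intro hx
        exact ⟨Or.inr hx, fun hx' => s1.2.2 x hx' x hx rfl⟩
      · rintro ⟨h1 | h1, h2⟩
        · exact absurd h1 h2
        · exact h1
    intro σ hσ h
    rw [key σ hσ, key σ₀ h0, h]
  rw [fqTensor_PJ]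
  refine Finset.sum_bij (fun σ _ => (std (σ.take i), std (σ.drop i))) ?_ ?_ ?_ ?_
  · intro σ hσ
    simp only [cls, Finset.mem_filter, Prod.mk.injEq] at hσ
    obtain ⟨⟨h1, h2⟩, h3, h4, h5⟩ := hσ
    have nd := ((mem_permsF _ _).1 h1).1
    have hl := len_of_mem h1
    rw [Finset.mem_product]
    have a1 := std_mem (σ.take i) (nd.sublist (List.take_sublist _ _))
    have a2 := std_mem (σ.drop i) (nd.sublist (List.drop_sublist _ _))
    rw [h4, List.length_take, hl, min_eq_left hi] at a1
    rw [h5, List.length_drop, hl] at a2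
    exact ⟨a1, a2⟩
  · intro σ hσ τ hτ e
    simp only [cls, Finset.mem_filter, Prod.mk.injEq] at hσ hτ e
    obtain ⟨⟨h1, h2⟩, h3, h4, h5⟩ := hσ
    obtain ⟨⟨k1, k2⟩, k3, k4, k5⟩ := hτ
    have nd := ((mem_permsF _ _).1 h1).1
    have nd' := ((mem_permsF _ _).1 k1).1
    rw [← List.take_append_drop i σ, ← List.take_append_drop i τ]
    rw [std_inj _ _ (nd.sublist (List.take_sublist i _)) (nd'.sublist (List.take_sublist i _))
      (h3.trans k3.symm) e.1,
      std_inj _ _ (nd.sublist (List.drop_sublist i _)) (nd'.sublist (List.drop_sublist i _))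
      ((dropSet σ h1 h3).trans (dropSet τ k1 k3).symm) e.2]
  · rintro ⟨α, β⟩ hp
    simp only [Finset.mem_product, cls, Finset.mem_filter] at hp
    obtain ⟨⟨a1, a2⟩, b1, b2⟩ := hp
    have ndt := z1.sublist (List.take_sublist i σ₀)
    have ndd := z1.sublist (List.drop_sublist i σ₀)
    obtain ⟨u, u1, u2, u3, u4⟩ := exists_lift (σ₀.take i).toFinset α (by
      rw [List.toFinset_card_of_nodup ndt, List.length_take, hl0, min_eq_left hi]; exact a1)
    obtain ⟨v, v1, v2, v3, v4⟩ := exists_lift (σ₀.drop i).toFinset β (by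
      rw [List.toFinset_card_of_nodup ndd, List.length_drop, hl0]; exact b1)
    have pu : u.Perm (σ₀.take i) := List.perm_of_nodup_nodup_toFinset_eq u1 ndt u2
    have pv : v.Perm (σ₀.drop i) := List.perm_of_nodup_nodup_toFinset_eq v1 ndd v2
    have lu : u.length = i := by
      rw [pu.length_eq, List.length_take, hl0, min_eq_left hi]
    have puv : (u ++ v).Perm σ₀ := by
      have := pu.append pv
      rwa [List.take_append_drop] at this
    have et : (u ++ v).take i = u := by rw [← lu]; simp
    have ed : (u ++ v).drop i = v := by rw [← lu]; simp
    refine ⟨u ++ v, ?_, by simp only [et, ed, u3, v3]⟩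
    simp only [cls, Finset.mem_filter, Prod.mk.injEq, et, ed]
    refine ⟨⟨?_, ?_⟩, u2, u4.trans a2, v4.trans b2⟩
    · rw [mem_permsF, puv.nodup_iff, List.toFinset_eq_of_perm _ _ puv]
      exact ⟨z1, z2⟩
    · rw [pshape_append u (σ₀.take i) v (σ₀.drop i) pu (u4.trans a2) pv (v4.trans b2),
        List.take_append_drop]
  · intro σ hσ
    rfl

theorem co_PJ (n : ℕ) (J : UBT × UBT) : coL (PJ n J) ∈ BaxterSpan2 := by
  have : coL (PJ n J) = ∑ i ∈ Finset.range (n + 1), ∑ σ ∈ cls n J,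
      (Finsupp.single (std (σ.take i), std (σ.drop i)) (1 : ℚ) : FQSym2) := by
    rw [Finset.sum_comm, PJ_eq, map_sum]
    refine Finset.sum_congr rfl fun σ hσ => ?_
    have hl : σ.length = n := len_of_mem (Finset.mem_filter.1 hσ).1
    rw [coL, Finsupp.linearCombination_single, one_smul, hl, ← List.sum_toFinset _ List.nodup_range,
      List.toFinset_range]
  rw [this]
  refine Submodule.sum_mem _ fun i hi => ?_
  have hi : i ≤ n := by simpa [Nat.lt_succ_iff] using hi
  rw [← Finset.sum_fiberwise_of_maps_to
    (g := fun σ : List ℕ => ((σ.take i).toFinset, Pshape (σ.take i), Pshape (σ.drop i)))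
    (t := (cls n J).image
      (fun σ : List ℕ => ((σ.take i).toFinset, Pshape (σ.take i), Pshape (σ.drop i))))
    fun π hπ => Finset.mem_image_of_mem _ hπ]
  refine Submodule.sum_mem _ fun K hK => ?_
  obtain ⟨σ₀, h0, rfl⟩ := Finset.mem_image.1 hK
  obtain ⟨h1, rfl⟩ := Finset.mem_filter.1 h0
  rw [co_fiber n i hi σ₀ h1]
  exact Submodule.subset_span ⟨_, _, _, _, rfl⟩

/-- the family `{P_J}` spans a Hopf subalgebra of FQSym, i.e. its
span is closed under the product and the coproduct of FQSym. -/
theorem baxter_is_hopf_subalgebra :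
    (∀ x ∈ BaxterSpan, ∀ y ∈ BaxterSpan, fqMul x y ∈ BaxterSpan) ∧
    (∀ x ∈ BaxterSpan, fqCoprod x ∈ BaxterSpan2) := by
  constructor
  · intro x hx y hy
    rw [fqMul_eq]
    refine LinearMap.BilinMap.apply_apply_mem_of_mem_span BaxterSpan _ _ mulL ?_ x y hx hy
    rintro _ ⟨n, J, rfl⟩ _ ⟨m, J', rfl⟩
    exact mul_PJ n m J J'
  · intro x hx
    rw [fqCoprod_eq]
    have : BaxterSpan ≤ BaxterSpan2.comap coL := by
      refine Submodule.span_le.2 ?_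
      rintro _ ⟨n, J, rfl⟩
      exact co_PJ n J
    exact this hx
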